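/- (Nonexistence criterion, right-focal problem) If ∑_{s=a+2}^{b} |q(s)| < Γ(α)/rf(b−a−1, α−1), then the only function u : N[a+1,b] → ℝ satisfying u(t) = ∑_{s=a+2}^{b} G_r(t, s) q(s) u(s) for every t with a+1 ≤ t ≤ b (the Green's-function form of the right-focal fractional boundary value problem ∇_a^α u(t) + q(t)u(t) = 0 for a+2 ≤ t ≤ b, with u(a+1) = 0 and ∇_a^{α−1} u(b) = 0) is the identically zero function. -/

import Mathlib

/-- Rising factorial `rf x r = Γ(x+r)/Γ(x)`, with the convention `rf 0 r = 0`. -/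
noncomputable def rf (x r : ℝ) : ℝ := if x = 0 then 0 else Real.Gamma (x + r) / Real.Gamma x

/-- The right-focal Green's function. -/
noncomputable def Gr (a : ℤ) (α : ℝ) (t s : ℤ) : ℝ :=
  if t ≤ s - 1 then
    (1 / Real.Gamma α) * rf (t - a - 1 : ℝ) (α - 1)
  else
    (1 / Real.Gamma α) * (rf (t - a - 1 : ℝ) (α - 1) - rf (t - s + 1 : ℝ) (α - 1))

/-!
Log-convexity of `Γ` makes `x ↦ Γ(x + r) / Γ(x)` nondecreasing for `r ≥ 0`, so that
`0 ≤ G_r(t, s) ≤ rf(b - a - 1, α - 1) / Γ(α)`. The smallness of `∑ |q|` therefore says that the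
matrix `(G_r(t, s) q(s))` has absolute row sums less than `1`, and evaluating `u = G_r q u` at a
point where `|u|` is maximal forces `u = 0`.
-/

open Finset Real

theorem eq_zero_of_eq_sum_smul_of_sum_norm_lt_one {ι R E : Type*} [NormedRing R]
    [NormedAddCommGroup E] [Module R E] [IsBoundedSMul R E] {S T : Finset ι} (hTS : T ⊆ S)
    {K : ι → ι → R} (hK : ∀ t ∈ S, ∑ s ∈ T, ‖K t s‖ < 1) {u : ι → E}
    (hu : ∀ t ∈ S, u t = ∑ s ∈ T, K t s • u s) {t : ι} (ht : t ∈ S) : u t = 0 := by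
  obtain ⟨m, hm, hmax⟩ := S.exists_max_image (‖u ·‖) ⟨t, ht⟩
  have hcontract : ‖u m‖ ≤ (∑ s ∈ T, ‖K m s‖) * ‖u m‖ :=
    calc ‖u m‖ = ‖∑ s ∈ T, K m s • u s‖ := by rw [← hu m hm]
      _ ≤ ∑ s ∈ T, ‖K m s • u s‖ := norm_sum_le _ _
      _ ≤ ∑ s ∈ T, ‖K m s‖ * ‖u m‖ := sum_le_sum fun s hs ↦
          (norm_smul_le _ _).trans <| by gcongr; exact hmax s (hTS hs)
      _ = (∑ s ∈ T, ‖K m s‖) * ‖u m‖ := (sum_mul ..).symm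
  have hm_nonpos : ‖u m‖ ≤ 0 := by
    by_contra! hpos
    exact hcontract.not_gt (mul_lt_of_lt_one_left hpos (hK m hm))
  exact norm_le_zero_iff.mp ((hmax t ht).trans hm_nonpos)

theorem map_add_right_add_map_le_of_convexOn {𝕜 : Type*} [Field 𝕜] [LinearOrder 𝕜]
    [IsStrictOrderedRing 𝕜] {s : Set 𝕜} {f : 𝕜 → 𝕜} (hf : ConvexOn 𝕜 s f) {x y r : 𝕜}
    (hx : x ∈ s) (hyr : y + r ∈ s) (hxy : x ≤ y) (hr : 0 ≤ r) :
    f (x + r) + f y ≤ f x + f (y + r) := by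
  obtain rfl | hlt := hxy.eq_or_lt
  · exact (add_comm _ _).le
  have hd : 0 < y - x + r := by linarith
  -- `x + r` and `y` are the convex combinations of `x` and `y + r` with swapped weights.
  set p := (y - x) / (y - x + r) with hp
  set w := r / (y - x + r) with hw
  have hp0 : 0 ≤ p := div_nonneg (sub_nonneg.mpr hxy) hd.le
  have hw0 : 0 ≤ w := div_nonneg hr hd.le
  have hpw : p + w = 1 := by rw [hp, hw, ← add_div, div_self hd.ne']
  have hwd : w * (y - x + r) = r := div_mul_cancel₀ _ hd.ne'
  have hxr : p • x + w • (y + r) = x + r := by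
    simp only [smul_eq_mul]; linear_combination x * hpw + hwd
  have hy : w • x + p • (y + r) = y := by
    simp only [smul_eq_mul]; linear_combination (y + r) * hpw - hwd
  have hfxr := hf.2 hx hyr hp0 hw0 hpw
  have hfy := hf.2 hx hyr hw0 hp0 (by rwa [add_comm])
  rw [hxr, smul_eq_mul, smul_eq_mul] at hfxr
  rw [hy, smul_eq_mul, smul_eq_mul] at hfy
  calc f (x + r) + f y ≤ (p * f x + w * f (y + r)) + (w * f x + p * f (y + r)) :=
        add_le_add hfxr hfy
    _ = f x + f (y + r) := by linear_combination (f x + f (y + r)) * hpw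

theorem Gamma_add_div_Gamma_le {x y r : ℝ} (hx : 0 < x) (hxy : x ≤ y) (hr : 0 ≤ r) :
    Gamma (x + r) / Gamma x ≤ Gamma (y + r) / Gamma y := by
  have hy : 0 < y := hx.trans_le hxy
  have hΓx := Gamma_pos_of_pos hx
  have hΓy := Gamma_pos_of_pos hy
  have hΓxr : 0 < Gamma (x + r) := Gamma_pos_of_pos (by positivity)
  have hΓyr : 0 < Gamma (y + r) := Gamma_pos_of_pos (by positivity)
  have hlog : log (Gamma (x + r)) + log (Gamma y) ≤ log (Gamma x) + log (Gamma (y + r)) :=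
    map_add_right_add_map_le_of_convexOn convexOn_log_Gamma hx (add_pos_of_pos_of_nonneg hy hr)
      hxy hr
  rw [← log_mul hΓxr.ne' hΓy.ne', ← log_mul hΓx.ne' hΓyr.ne',
    log_le_log_iff (by positivity) (by positivity)] at hlog
  rw [div_le_div_iff₀ hΓx hΓy]
  exact hlog.trans_eq (mul_comm _ _)

section rf

variable {x r : ℝ}

theorem rf_pos (hx : 0 < x) (hr : 0 ≤ r) : 0 < rf x r := by
  rw [rf, if_neg hx.ne']
  exact div_pos (Gamma_pos_of_pos (by positivity)) (Gamma_pos_of_pos hx)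

theorem rf_nonneg (hx : 0 ≤ x) (hr : 0 ≤ r) : 0 ≤ rf x r := by
  obtain rfl | hpos := hx.eq_or_lt
  · simp [rf]
  · exact (rf_pos hpos hr).le

theorem monotoneOn_rf (hr : 0 ≤ r) : MonotoneOn (rf · r) (Set.Ici 0) := by
  intro x (hx : 0 ≤ x) y hy hxy
  obtain rfl | hpos := hx.eq_or_lt
  · simpa [rf] using rf_nonneg hy hr
  · simpa only [rf, if_neg hpos.ne', if_neg (hpos.trans_le hxy).ne'] using
      Gamma_add_div_Gamma_le hpos hxy hr

end rf

section GreenFunction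

variable {a b t s : ℤ} {α : ℝ}

theorem Gr_nonneg (hα : 1 ≤ α) (ht : a + 1 ≤ t) (hs : a + 2 ≤ s) : 0 ≤ Gr a α t s := by
  have hΓ : 0 ≤ 1 / Gamma α := one_div_nonneg.mpr (Gamma_nonneg_of_nonneg (by linarith))
  have hr : 0 ≤ α - 1 := sub_nonneg.mpr hα
  have hta : (0 : ℝ) ≤ t - a - 1 := by exact_mod_cast (by lia : 0 ≤ t - a - 1)
  rw [Gr]
  split_ifs with hts
  · exact mul_nonneg hΓ (rf_nonneg hta hr)
  · have hts' : (0 : ℝ) ≤ t - s + 1 := by exact_mod_cast (by lia : 0 ≤ t - s + 1)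
    have hle : (t - s + 1 : ℝ) ≤ t - a - 1 := by
      exact_mod_cast (by lia : t - s + 1 ≤ t - a - 1)
    exact mul_nonneg hΓ (sub_nonneg.mpr (monotoneOn_rf hr hts' hta hle))

theorem Gr_le_rf_div_Gamma (hα : 1 ≤ α) (ht : a + 1 ≤ t) (htb : t ≤ b) :
    Gr a α t s ≤ rf (b - a - 1) (α - 1) / Gamma α := by
  have hΓ : 0 ≤ 1 / Gamma α := one_div_nonneg.mpr (Gamma_nonneg_of_nonneg (by linarith))
  have hr : 0 ≤ α - 1 := sub_nonneg.mpr hα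
  have hta : (0 : ℝ) ≤ t - a - 1 := by exact_mod_cast (by lia : 0 ≤ t - a - 1)
  have hle : (t - a - 1 : ℝ) ≤ b - a - 1 := by
    exact_mod_cast (by lia : t - a - 1 ≤ b - a - 1)
  have hmono : rf (t - a - 1) (α - 1) ≤ rf (b - a - 1) (α - 1) :=
    monotoneOn_rf hr hta (hta.trans hle) hle
  rw [← one_div_mul_eq_div, Gr]
  split_ifs with hts
  · exact mul_le_mul_of_nonneg_left hmono hΓ
  · have hts' : (0 : ℝ) ≤ t - s + 1 := by exact_mod_cast (by lia : 0 ≤ t - s + 1)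
    exact mul_le_mul_of_nonneg_left ((sub_le_self _ (rf_nonneg hts' hr)).trans hmono) hΓ

theorem sum_norm_Gr_mul_le (hα : 1 ≤ α) (ht : a + 1 ≤ t) (htb : t ≤ b) (q : ℤ → ℝ) :
    ∑ s ∈ Icc (a + 2) b, ‖Gr a α t s * q s‖ ≤
      rf (b - a - 1) (α - 1) / Gamma α * ∑ s ∈ Icc (a + 2) b, |q s| := by
  rw [mul_sum]
  refine sum_le_sum fun s hs ↦ ?_
  rw [norm_mul, norm_of_nonneg (Gr_nonneg hα ht (mem_Icc.mp hs).1), norm_eq_abs]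
  exact mul_le_mul_of_nonneg_right (Gr_le_rf_div_Gamma hα ht htb) (abs_nonneg _)

end GreenFunction

theorem right_focal_nonexistence_general {E : Type*} [NormedAddCommGroup E] [NormedSpace ℝ E]
    {a b : ℤ} (hab : 2 ≤ b - a) {α : ℝ} (hα : 1 ≤ α) {q : ℤ → ℝ}
    (hq : ∑ s ∈ Icc (a + 2) b, |q s| < Gamma α / rf (b - a - 1) (α - 1)) {u : ℤ → E}
    (hu : ∀ t : ℤ, a + 1 ≤ t → t ≤ b →
      u t = ∑ s ∈ Icc (a + 2) b, (Gr a α t s * q s) • u s)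
    {t : ℤ} (ht : a + 1 ≤ t) (htb : t ≤ b) : u t = 0 := by
  have hΓ : 0 < Gamma α := Gamma_pos_of_pos (by linarith)
  have hba : (0 : ℝ) < b - a - 1 := by exact_mod_cast (by lia : 0 < b - a - 1)
  have hrf : 0 < rf (b - a - 1) (α - 1) := rf_pos hba (sub_nonneg.mpr hα)
  have hsmall : rf (b - a - 1) (α - 1) / Gamma α * ∑ s ∈ Icc (a + 2) b, |q s| < 1 := by
    rwa [← inv_div, inv_mul_lt_one₀ (div_pos hΓ hrf)]
  have hsub : Icc (a + 2) b ⊆ Icc (a + 1) b := Icc_subset_Icc_left (by lia)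
  have hrow : ∀ t ∈ Icc (a + 1) b, ∑ s ∈ Icc (a + 2) b, ‖Gr a α t s * q s‖ < 1 := fun t ht ↦
    (sum_norm_Gr_mul_le hα (mem_Icc.mp ht).1 (mem_Icc.mp ht).2 q).trans_lt hsmall
  exact eq_zero_of_eq_sum_smul_of_sum_norm_lt_one hsub hrow
    (fun t ht ↦ hu t (mem_Icc.mp ht).1 (mem_Icc.mp ht).2) (mem_Icc.mpr ⟨ht, htb⟩)

theorem right_focal_nonexistence (a b : ℤ) (hab : 2 ≤ b - a) (α : ℝ)
    (hα1 : 1 < α) (hα2 : α < 2) (q : ℤ → ℝ)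
    (hq : ∑ s ∈ Finset.Icc (a + 2) b, |q s| < Real.Gamma α / rf (b - a - 1 : ℝ) (α - 1)) :
    ∀ u : ℤ → ℝ,
      (∀ t : ℤ, a + 1 ≤ t → t ≤ b →
        u t = ∑ s ∈ Finset.Icc (a + 2) b, Gr a α t s * q s * u s) →
      ∀ t : ℤ, a + 1 ≤ t → t ≤ b → u t = 0 :=
  fun _ hu _ ht htb ↦ right_focal_nonexistence_general hab hα1.le hq hu ht htb
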